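/- Fix d ≥ 2, a horizon T ≥ 1, and sequences p_1,…,p_T ∈ Δ(d) and ℓ_1,…,ℓ_T ∈ [0,1]^d, and define Reg(φ) = Σ_{t=1}^T ⟨p_t − φ^T p_t, ℓ_t⟩ for φ ∈ S. Suppose there are constants C, B ≥ 0 such that Reg(φ) ≤ C·√(T·log(1/π(φ))) + B for every φ ∈ Φ_b. Then for every row-stochastic φ ∈ S, Reg(φ) ≤ C·√(T·(2 c_φ log d + 2)) + B. -/

import Mathlib

open Finset

/-- The binary row-stochastic matrix associated with a map `f : [d] → [d]`. -/
def toMat (d : ℕ) (f : Fin d → Fin d) : Matrix (Fin d) (Fin d) ℝ :=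
  fun i j => if f i = j then 1 else 0

/-- The set `Φ_b` of binary row-stochastic `d × d` matrices. -/
noncomputable def PhiB (d : ℕ) : Finset (Matrix (Fin d) (Fin d) ℝ) := by
  classical exact Finset.image (toMat d) Finset.univ

/-- A matrix is row-stochastic if every row lies in the simplex. -/
def RowStochastic {d : ℕ} (φ : Matrix (Fin d) (Fin d) ℝ) : Prop :=
  ∀ i, (∀ j, 0 ≤ φ i j) ∧ ∑ j, φ i j = 1

/-- A vector lies in the probability simplex `Δ(d)`. -/
def InSimplex (d : ℕ) (p : Fin d → ℝ) : Prop :=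
  (∀ i, 0 ≤ p i) ∧ ∑ i, p i = 1

/-- The `ψ`-induced weight of `φ`: `π_ψ(φ) = ∏ i ⟨ψ_{i:}, φ_{i:}⟩`. -/
noncomputable def piInd {d : ℕ} (ψ φ : Matrix (Fin d) (Fin d) ℝ) : ℝ :=
  ∏ i, ∑ j, ψ i j * φ i j

/-- `ψ^k = ((d-2)/(d-1))·1 e_k^T + (1/(d(d-1)))·1 1^T`. -/
noncomputable def psiK (d : ℕ) (k : Fin d) : Matrix (Fin d) (Fin d) ℝ :=
  fun _ j => ((d : ℝ) - 2) / ((d : ℝ) - 1) * (if j = k then 1 else 0) + 1 / ((d : ℝ) * ((d : ℝ) - 1))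

/-- `ψ^{d+1} = ((d-2)/(d-1))·I + (1/(d(d-1)))·1 1^T`. -/
noncomputable def psiSelf (d : ℕ) : Matrix (Fin d) (Fin d) ℝ :=
  fun i j => ((d : ℝ) - 2) / ((d : ℝ) - 1) * (if i = j then 1 else 0) + 1 / ((d : ℝ) * ((d : ℝ) - 1))

/-- The special prior `π = (1/(2d)) Σ_k π_{ψ^k} + (1/2) π_{ψ^{d+1}}`. -/
noncomputable def priorPi (d : ℕ) (φ : Matrix (Fin d) (Fin d) ℝ) : ℝ :=
  1 / (2 * d) * ∑ k : Fin d, piInd (psiK d k) φ + 1 / 2 * piInd (psiSelf d) φ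

/-- `d^self_φ`: the number of indices `i` whose row equals `e_i^T`. -/
noncomputable def dSelf {d : ℕ} (φ : Matrix (Fin d) (Fin d) ℝ) : ℕ :=
  Nat.card {i : Fin d // φ i = fun j => if j = i then (1 : ℝ) else 0}

/-- `d^unif_φ`: the maximum multiplicity in the multiset of rows of `φ`. -/
noncomputable def dUnif {d : ℕ} (φ : Matrix (Fin d) (Fin d) ℝ) : ℕ :=
  Finset.univ.sup fun i : Fin d => Nat.card {j : Fin d // φ j = φ i}

/-- Complexity measure for binary row-stochastic matrices. -/
noncomputable def cB {d : ℕ} (φ : Matrix (Fin d) (Fin d) ℝ) : ℕ :=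
  min (d - dSelf φ) (d - dUnif φ + 1)

/-- `Q_φ`: distributions over `Φ_b` (indexed by maps `f : [d] → [d]`) averaging to `φ`. -/
def QSet (d : ℕ) (φ : Matrix (Fin d) (Fin d) ℝ) : Set ((Fin d → Fin d) → ℝ) :=
  {q | (∀ f, 0 ≤ q f) ∧ (∑ f, q f = 1) ∧ ∀ i j, ∑ f, q f * toMat d f i j = φ i j}

/-- Extended complexity measure `c_φ = inf_{q ∈ Q_φ} E_{φ'∼q}[c_{φ'}]`. -/
noncomputable def cGen (d : ℕ) (φ : Matrix (Fin d) (Fin d) ℝ) : ℝ :=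
  sInf ((fun q => ∑ f : Fin d → Fin d, q f * (cB (toMat d f) : ℝ)) '' QSet d φ)

/-- Matrix inner product `⟨φ, p ℓ^T⟩`. -/
noncomputable def lossInner {d : ℕ} (φ : Matrix (Fin d) (Fin d) ℝ) (p ℓ : Fin d → ℝ) : ℝ :=
  ∑ i, ∑ j, φ i j * (p i * ℓ j)

/-- The mean matrix `E_{f∼q}[φ_f]` of a weight vector over binary matrices. -/
noncomputable def mixMat (d : ℕ) (q : (Fin d → Fin d) → ℝ) : Matrix (Fin d) (Fin d) ℝ :=
  fun i j => ∑ f, q f * toMat d f i j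

/-- KL divergence of `q` (a distribution over `Φ_b`, indexed by maps) from the prior `π`. -/
noncomputable def klPrior (d : ℕ) (q : (Fin d → Fin d) → ℝ) : ℝ :=
  ∑ f, q f * Real.log (q f / priorPi d (toMat d f))

/-- The kernel `K(B,A) = Σ_{φ∈Φ_b} π(φ) Π_{i,j : φ_{ij}=1} B_{ij} A_{ij}`. -/
noncomputable def kernelK (d : ℕ) (B A : Matrix (Fin d) (Fin d) ℝ) : ℝ := by
  classical exact
    ∑ φ ∈ PhiB d, priorPi d φ * ∏ i, ∏ j, if φ i j = 1 then B i j * A i j else 1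

lemma toMat_row_iff {d : ℕ} (f : Fin d → Fin d) (i k : Fin d) :
    (toMat d f i = fun j => if j = k then (1 : ℝ) else 0) ↔ f i = k := by
  constructor
  · intro h
    have := congrFun h k
    simp only [toMat] at this
    by_contra hne
    simp [hne] at this
  · rintro rfl
    funext j
    simp only [toMat, eq_comm]

lemma toMat_row_eq {d : ℕ} (f : Fin d → Fin d) (i j : Fin d) :
    toMat d f j = toMat d f i ↔ f j = f i := by
  rw [← toMat_row_iff f j (f i)]
  rw [(toMat_row_iff f i (f i)).2 rfl]

lemma piInd_toMat {d : ℕ} (ψ : Matrix (Fin d) (Fin d) ℝ) (f : Fin d → Fin d) :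
    piInd ψ (toMat d f) = ∏ i, ψ i (f i) := by
  simp [piInd, toMat]

lemma dSelf_toMat {d : ℕ} (f : Fin d → Fin d) :
    dSelf (toMat d f) = (univ.filter fun i => f i = i).card := by
  unfold dSelf
  simp only [toMat_row_iff]
  rw [Nat.card_eq_fintype_card, Fintype.card_subtype]

lemma dUnif_toMat {d : ℕ} (hd : 2 ≤ d) (f : Fin d → Fin d) :
    ∃ k, dUnif (toMat d f) = (univ.filter fun i => f i = k).card := by
  have hne : (univ : Finset (Fin d)).Nonempty := ⟨⟨0, by omega⟩, mem_univ _⟩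
  obtain ⟨i, -, hi⟩ := Finset.exists_mem_eq_sup univ hne
    (fun i : Fin d => Nat.card {j : Fin d // toMat d f j = toMat d f i})
  refine ⟨f i, ?_⟩
  unfold dUnif
  rw [hi]
  simp only [toMat_row_eq]
  rw [Nat.card_eq_fintype_card, Fintype.card_subtype]

lemma prod_lower {d : ℕ} (hd : 2 ≤ d) (P : Fin d → Prop) [DecidablePred P] (g : Fin d → ℝ)
    (hg : ∀ i, (if P i then 1 - 1 / (d : ℝ) else 1 / (d : ℝ) ^ 2) ≤ g i) :
    (1 - 1 / (d : ℝ)) ^ d * (1 / (d : ℝ) ^ 2) ^ (d - (univ.filter P).card) ≤ ∏ i, g i := by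
  have hd' : (2 : ℝ) ≤ d := by exact_mod_cast hd
  have h1 : 1 / (d : ℝ) ≤ 1 := by
    rw [div_le_one (by linarith)]; linarith
  have h0 : (0 : ℝ) ≤ 1 - 1 / (d : ℝ) := by linarith
  have h2 : 1 - 1 / (d : ℝ) ≤ 1 := by
    have : (0 : ℝ) ≤ 1 / (d : ℝ) := by positivity
    linarith
  refine le_trans ?_ (Finset.prod_le_prod (fun i _ => ?_) (fun i _ => hg i))
  · rw [Finset.prod_ite]
    simp only [Finset.prod_const]
    have hc := Finset.card_filter_add_card_filter_not (s := (univ : Finset (Fin d))) P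
    rw [Finset.card_univ, Fintype.card_fin] at hc
    have e : (univ.filter fun i => ¬ P i).card = d - (univ.filter P).card := by omega
    rw [e]
    refine mul_le_mul_of_nonneg_right ?_ (by positivity)
    refine pow_le_pow_of_le_one h0 h2 ?_
    have := Finset.card_filter_le (univ : Finset (Fin d)) P
    rwa [Finset.card_univ, Fintype.card_fin] at this
  · split_ifs
    · exact h0
    · positivity

lemma num_bound {d : ℕ} (hd : 3 ≤ d) : 2 * Real.exp (-2) ≤ (1 - 1 / (d : ℝ)) ^ d := by
  have he := Real.exp_one_gt_d9
  have hd' : (3 : ℝ) ≤ d := by exact_mod_cast hd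
  have e2 : Real.exp (-2) = (Real.exp 1)⁻¹ * (Real.exp 1)⁻¹ := by
    rw [← Real.exp_neg, ← Real.exp_add]; norm_num
  have hinv : (Real.exp 1)⁻¹ ≤ 3 / 8 := by
    rw [inv_le_comm₀ (by positivity) (by norm_num)]; norm_num; linarith
  have hpos : 0 < (Real.exp 1)⁻¹ := by positivity
  rcases eq_or_lt_of_le hd with rfl | h4
  · rw [e2]; norm_num; nlinarith
  · have h4' : (4 : ℝ) ≤ d := by exact_mod_cast h4
    obtain ⟨n, rfl⟩ : ∃ n, d = n + 1 := ⟨d - 1, by omega⟩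
    push_cast at *
    have hn : (0 : ℝ) < n := by linarith
    have hbase : 1 - 1 / ((n : ℝ) + 1) = (1 + 1 / (n : ℝ))⁻¹ := by
      field_simp; ring
    have hk : (1 + 1 / (n : ℝ)) ^ n ≤ Real.exp 1 := by
      have := Real.add_one_le_exp (1 / (n : ℝ))
      calc (1 + 1 / (n : ℝ)) ^ n ≤ (Real.exp (1 / n)) ^ n := by
            apply pow_le_pow_left₀ (by positivity); linarith
        _ = Real.exp 1 := by
            rw [← Real.exp_nat_mul]; congr 1; field_simp
    have hk2 : (Real.exp 1)⁻¹ ≤ (1 - 1 / ((n : ℝ) + 1)) ^ n := by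
      rw [hbase, inv_pow]
      exact inv_anti₀ (by positivity) hk
    have h34 : (3 : ℝ) / 4 ≤ 1 - 1 / ((n : ℝ) + 1) := by
      have : 1 / ((n : ℝ) + 1) ≤ 1 / 4 := one_div_le_one_div_of_le (by norm_num) h4'
      linarith
    rw [pow_succ, e2]
    calc 2 * ((Real.exp 1)⁻¹ * (Real.exp 1)⁻¹) ≤ (Real.exp 1)⁻¹ * (3 / 4) := by nlinarith
      _ ≤ _ := mul_le_mul hk2 h34 (by norm_num) (le_trans hpos.le hk2)

lemma ab_eq {d : ℕ} (hd : 2 ≤ d) :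
    ((d : ℝ) - 2) / ((d : ℝ) - 1) + 1 / ((d : ℝ) * ((d : ℝ) - 1)) = 1 - 1 / (d : ℝ) := by
  have hd' : (2 : ℝ) ≤ d := by exact_mod_cast hd
  have h1 : (d : ℝ) - 1 ≠ 0 := by linarith
  have h2 : (d : ℝ) ≠ 0 := by linarith
  field_simp; ring

lemma b_ge {d : ℕ} (hd : 2 ≤ d) :
    1 / (d : ℝ) ^ 2 ≤ 1 / ((d : ℝ) * ((d : ℝ) - 1)) := by
  have hd' : (2 : ℝ) ≤ d := by exact_mod_cast hd
  apply one_div_le_one_div_of_le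
  · apply mul_pos <;> linarith
  · nlinarith

lemma piSelf_lower {d : ℕ} (hd : 2 ≤ d) (f : Fin d → Fin d) :
    (1 - 1 / (d : ℝ)) ^ d * (1 / (d : ℝ) ^ 2) ^ (d - dSelf (toMat d f))
      ≤ piInd (psiSelf d) (toMat d f) := by
  rw [piInd_toMat, dSelf_toMat]
  apply prod_lower hd (fun i => f i = i)
  intro i
  have := ab_eq hd
  have := b_ge hd
  by_cases h : f i = i
  · simp only [psiSelf, h, if_true]; linarith
  · have h' : ¬ i = f i := fun e => h e.symm
    simp only [psiSelf, h, h', if_false]; linarith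

lemma piK_lower {d : ℕ} (hd : 2 ≤ d) (f : Fin d → Fin d) (k : Fin d) :
    (1 - 1 / (d : ℝ)) ^ d * (1 / (d : ℝ) ^ 2) ^ (d - (univ.filter fun i => f i = k).card)
      ≤ piInd (psiK d k) (toMat d f) := by
  rw [piInd_toMat]
  apply prod_lower hd (fun i => f i = k)
  intro i
  have := ab_eq hd
  have := b_ge hd
  by_cases h : f i = k
  · simp only [psiK, h, if_true]; linarith
  · simp only [psiK, h, if_false]; linarith

lemma one_sub_nonneg {d : ℕ} (hd : 2 ≤ d) : 0 ≤ 1 - 1 / (d : ℝ) := by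
  have hd' : (2 : ℝ) ≤ d := by exact_mod_cast hd
  have : 1 / (d : ℝ) ≤ 1 := by
    rw [div_le_one (by linarith)]; linarith
  linarith

lemma prior_lower {d : ℕ} (hd : 2 ≤ d) (f : Fin d → Fin d) :
    Real.exp (-2) * (1 / (d : ℝ) ^ 2) ^ (cB (toMat d f)) ≤ priorPi d (toMat d f) := by
  have hd' : (2 : ℝ) ≤ d := by exact_mod_cast hd
  have hle1 : (1 / (d : ℝ) ^ 2) ≤ 1 := by
    rw [div_le_one (by positivity)]; nlinarith
  rcases eq_or_lt_of_le hd with rfl | h3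
  · have hp : priorPi 2 (toMat 2 f) = 1 / 4 := by
      simp only [priorPi, piInd_toMat, psiK, psiSelf]
      norm_num
    rw [hp]
    have he := Real.exp_one_gt_d9
    have e2 : Real.exp (-2) = (Real.exp 1)⁻¹ * (Real.exp 1)⁻¹ := by
      rw [← Real.exp_neg, ← Real.exp_add]; norm_num
    have hinv : (Real.exp 1)⁻¹ ≤ 1 / 2 := by
      rw [inv_le_comm₀ (by positivity) (by norm_num)]; norm_num; linarith
    have hpos : 0 < (Real.exp 1)⁻¹ := by positivity
    have : (1 / ((2 : ℕ) : ℝ) ^ 2) ^ (cB (toMat 2 f)) ≤ 1 := pow_le_one₀ (by positivity) hle1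
    calc _ ≤ Real.exp (-2) * 1 := by gcongr
      _ ≤ 1 / 4 := by rw [e2]; nlinarith
  · have hn := num_bound h3
    have h0 := one_sub_nonneg hd
    have hKnn : ∀ k, 0 ≤ piInd (psiK d k) (toMat d f) := fun k =>
      le_trans (by positivity) (piK_lower hd f k)
    have hSnn : 0 ≤ piInd (psiSelf d) (toMat d f) :=
      le_trans (by positivity) (piSelf_lower hd f)
    have hsumnn : 0 ≤ ∑ k, piInd (psiK d k) (toMat d f) := Finset.sum_nonneg fun k _ => hKnn k
    unfold cB
    rcases min_choice (d - dSelf (toMat d f)) (d - dUnif (toMat d f) + 1) with h | h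
    · rw [h]
      have h1 := piSelf_lower hd f
      have h2 : 0 ≤ 1 / (2 * (d : ℝ)) * ∑ k, piInd (psiK d k) (toMat d f) :=
        mul_nonneg (by positivity) hsumnn
      have h4 := mul_le_mul_of_nonneg_right hn
        (show (0 : ℝ) ≤ (1 / (d : ℝ) ^ 2) ^ (d - dSelf (toMat d f)) by positivity)
      unfold priorPi
      rw [mul_assoc] at h4
      have h5 := h4.trans h1
      generalize Real.exp (-2) * (1 / (d : ℝ) ^ 2) ^ (d - dSelf (toMat d f)) = u at h5 ⊢
      generalize 1 / (2 * (d : ℝ)) * ∑ k, piInd (psiK d k) (toMat d f) = v at h2 ⊢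
      linarith
    · rw [h]
      obtain ⟨k, hk⟩ := dUnif_toMat hd f
      rw [hk]
      have h1 := piK_lower hd f k
      generalize d - (univ.filter fun i => f i = k).card = m at h1 ⊢
      have hs := Finset.single_le_sum (fun k _ => hKnn k) (mem_univ k)
      have h4 := mul_le_mul_of_nonneg_right hn
        (show (0 : ℝ) ≤ (1 / (d : ℝ) ^ 2) ^ m by positivity)
      have h5 : 2 * Real.exp (-2) * (1 / (d : ℝ) ^ 2) ^ m
          ≤ ∑ k, piInd (psiK d k) (toMat d f) := (h4.trans h1).trans hs
      have h6 : 1 / (d : ℝ) ^ 2 ≤ 1 / (d : ℝ) :=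
        one_div_le_one_div_of_le (by linarith) (by nlinarith)
      unfold priorPi
      calc Real.exp (-2) * (1 / (d : ℝ) ^ 2) ^ (m + 1)
          = (Real.exp (-2) * (1 / (d : ℝ) ^ 2) ^ m) * (1 / (d : ℝ) ^ 2) := by ring
        _ ≤ (Real.exp (-2) * (1 / (d : ℝ) ^ 2) ^ m) * (1 / (d : ℝ)) := by gcongr
        _ = 1 / (2 * d) * (2 * Real.exp (-2) * (1 / (d : ℝ) ^ 2) ^ m) := by field_simp
        _ ≤ 1 / (2 * d) * ∑ k, piInd (psiK d k) (toMat d f) := by gcongr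
        _ ≤ _ := le_add_of_nonneg_right (mul_nonneg (by norm_num) hSnn)

lemma log_prior {d : ℕ} (hd : 2 ≤ d) (f : Fin d → Fin d) :
    Real.log (1 / priorPi d (toMat d f)) ≤ 2 * (cB (toMat d f) : ℝ) * Real.log d + 2 := by
  have hd' : (2 : ℝ) ≤ d := by exact_mod_cast hd
  have h := prior_lower hd f
  have hpos : 0 < Real.exp (-2) * (1 / (d : ℝ) ^ 2) ^ (cB (toMat d f)) := by positivity
  have hl := Real.log_le_log hpos h
  rw [Real.log_mul (by positivity) (by positivity), Real.log_exp, Real.log_pow, one_div,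
    Real.log_inv, Real.log_pow] at hl
  rw [one_div, Real.log_inv]
  push_cast at hl
  linarith

lemma QSet_nonempty {d : ℕ} (φ : Matrix (Fin d) (Fin d) ℝ) (hφ : RowStochastic φ) :
    (QSet d φ).Nonempty := by
  refine ⟨fun f => ∏ i, φ i (f i), fun f => Finset.prod_nonneg fun i _ => (hφ i).1 _, ?_, ?_⟩
  · have h := Fintype.prod_sum (fun i j => φ i j)
    have h1 : ∏ i, ∑ j, φ i j = 1 := Finset.prod_eq_one fun i _ => (hφ i).2
    exact h.symm.trans h1
  · intro i j
    have key : ∀ f : Fin d → Fin d, (∏ k, φ k (f k)) * toMat d f i j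
        = ∏ k, (φ k (f k) * (if k = i then (if f k = j then 1 else 0) else 1)) := by
      intro f
      rw [Finset.prod_mul_distrib, Finset.prod_ite_eq' univ i]
      simp [toMat]
    simp only [key]
    rw [← Fintype.prod_sum (fun k x => φ k x * (if k = i then (if x = j then 1 else 0) else 1))]
    rw [Finset.prod_eq_single i]
    · simp
    · intro b _ hb
      simp [hb, (hφ b).2]
    · simp


/-- Fix `d ≥ 2`, `T ≥ 1`, sequences `p_t ∈ Δ(d)`, `ℓ_t ∈ [0,1]^d`, and
`Reg(φ) = Σ_t ⟨p_t − φ^T p_t, ℓ_t⟩`.  If there are constants `C, B ≥ 0` with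
`Reg(φ) ≤ C √(T log(1/π(φ))) + B` for every `φ ∈ Φ_b`, then for every row-stochastic `φ`,
`Reg(φ) ≤ C √(T (2 c_φ log d + 2)) + B`. -/
theorem stmt5 (d T : ℕ) (hd : 2 ≤ d) (hT : 1 ≤ T)
    (p ℓ : ℕ → Fin d → ℝ)
    (hp : ∀ t ∈ Finset.Icc 1 T, InSimplex d (p t))
    (hℓ : ∀ t ∈ Finset.Icc 1 T, ∀ i, 0 ≤ ℓ t i ∧ ℓ t i ≤ 1)
    (C B : ℝ) (hC : 0 ≤ C) (hB : 0 ≤ B)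
    (hbound : ∀ φ ∈ PhiB d,
      (∑ t ∈ Finset.Icc 1 T, ∑ i, (p t i - ∑ j, φ j i * p t j) * ℓ t i) ≤
        C * Real.sqrt ((T : ℝ) * Real.log (1 / priorPi d φ)) + B) :
    ∀ φ : Matrix (Fin d) (Fin d) ℝ, RowStochastic φ →
      (∑ t ∈ Finset.Icc 1 T, ∑ i, (p t i - ∑ j, φ j i * p t j) * ℓ t i) ≤
        C * Real.sqrt ((T : ℝ) * (2 * cGen d φ * Real.log d + 2)) + B := by

  intro φ hφ
  have hd' : (2 : ℝ) ≤ d := by exact_mod_cast hd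
  have hlog : 0 ≤ Real.log d := Real.log_nonneg (by linarith)
  set R : Matrix (Fin d) (Fin d) ℝ → ℝ := fun φ =>
    ∑ t ∈ Finset.Icc 1 T, ∑ i, (p t i - ∑ j, φ j i * p t j) * ℓ t i with hR
  set g : ℝ → ℝ := fun x => C * Real.sqrt ((T : ℝ) * (2 * x * Real.log d + 2)) + B with hg
  have hmono : Monotone g := by
    intro x y hxy
    simp only [hg]
    gcongr
  have hcont : Continuous g := by
    simp only [hg]
    fun_prop
  set S := ((fun q => ∑ f : Fin d → Fin d, q f * (cB (toMat d f) : ℝ)) '' QSet d φ) with hS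
  have hSne : S.Nonempty := (QSet_nonempty φ hφ).image _
  have hSbdd : BddBelow S := by
    refine ⟨0, ?_⟩
    rintro _ ⟨q, hq, rfl⟩
    exact Finset.sum_nonneg fun f _ => mul_nonneg (hq.1 f) (by positivity)
  change R φ ≤ g (sInf S)
  rw [hmono.map_csInf_of_continuousAt hcont.continuousAt hSne hSbdd]
  refine le_csInf (hSne.image _) ?_
  rintro _ ⟨_, ⟨q, ⟨hq0, hq1, hqφ⟩, rfl⟩, rfl⟩
  -- linearity of the regret
  have hlin : R φ = ∑ f, q f * R (toMat d f) := by
    simp only [hR, Finset.mul_sum]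
    refine Eq.trans ?_ Finset.sum_comm
    refine Finset.sum_congr rfl fun t _ => ?_
    refine Eq.trans ?_ Finset.sum_comm
    refine Finset.sum_congr rfl fun i _ => ?_
    have e1 : ∑ j, φ j i * p t j = ∑ f, q f * ∑ j, toMat d f j i * p t j := by
      simp only [← hqφ, Finset.sum_mul, Finset.mul_sum]
      rw [Finset.sum_comm]
      simp only [mul_assoc]
    have e2 : p t i = ∑ f, q f * p t i := by rw [← Finset.sum_mul, hq1, one_mul]
    rw [e1]
    nth_rewrite 1 [e2]
    rw [← Finset.sum_sub_distrib, Finset.sum_mul]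
    refine Finset.sum_congr rfl fun f _ => ?_
    ring
  have hf : ∀ f, R (toMat d f) ≤
      C * Real.sqrt ((T : ℝ) * (2 * (cB (toMat d f) : ℝ) * Real.log d + 2)) + B := by
    intro f
    refine (hbound (toMat d f) ?_).trans ?_
    · simp [PhiB]
    · have := log_prior hd f
      gcongr
  have hjensen : ∑ f, q f * Real.sqrt ((T : ℝ) * (2 * (cB (toMat d f) : ℝ) * Real.log d + 2))
      ≤ Real.sqrt (∑ f, q f * ((T : ℝ) * (2 * (cB (toMat d f) : ℝ) * Real.log d + 2))) := by
    have := Real.strictConcaveOn_sqrt.concaveOn.le_map_sum (t := univ) (w := q)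
      (p := fun f => (T : ℝ) * (2 * (cB (toMat d f) : ℝ) * Real.log d + 2))
      (fun f _ => hq0 f) hq1 (fun f _ => Set.mem_Ici.2 (by positivity))
    simpa only [smul_eq_mul] using this
  have hsum : ∑ f, q f * ((T : ℝ) * (2 * (cB (toMat d f) : ℝ) * Real.log d + 2))
      = (T : ℝ) * (2 * (∑ f, q f * (cB (toMat d f) : ℝ)) * Real.log d + 2) := by
    have : ∀ f, q f * ((T : ℝ) * (2 * (cB (toMat d f) : ℝ) * Real.log d + 2))
      = (T : ℝ) * 2 * Real.log d * (q f * (cB (toMat d f) : ℝ)) + (T : ℝ) * 2 * q f := by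
      intro f; ring
    simp only [this]
    rw [Finset.sum_add_distrib, ← Finset.mul_sum, ← Finset.mul_sum, hq1]
    ring
  rw [hlin]
  calc ∑ f, q f * R (toMat d f)
      ≤ ∑ f, q f * (C * Real.sqrt ((T : ℝ) * (2 * (cB (toMat d f) : ℝ) * Real.log d + 2)) + B) :=
        Finset.sum_le_sum fun f _ => mul_le_mul_of_nonneg_left (hf f) (hq0 f)
    _ = C * (∑ f, q f * Real.sqrt ((T : ℝ) * (2 * (cB (toMat d f) : ℝ) * Real.log d + 2))) + B := by
        simp only [mul_add]
        rw [Finset.sum_add_distrib, ← Finset.sum_mul, hq1, one_mul, Finset.mul_sum]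
        congr 1
        refine Finset.sum_congr rfl fun f _ => ?_
        ring
    _ ≤ C * Real.sqrt (∑ f, q f * ((T : ℝ) * (2 * (cB (toMat d f) : ℝ) * Real.log d + 2))) + B := by
        gcongr
    _ = _ := by rw [hsum]
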